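/- arXiv:1910.09500 — 2 statements merged into one kernel-verified Lean document; each statement's English description precedes it below -/
import Mathlib

section
/- Let λ : ℤ₊ → ℝ satisfy (UB) and let N ≥ 1. For all t ≥ 0 and all (y,x) ∈ W^{N,N+1}, the series Σ_{(y',x') ∈ W^{N,N+1}} U_t^{N,N+1}[(y,x),(y',x')] converges and its value is at most 1. -/
open Complex MeasureTheory Finset
open scoped Real ComplexOrder

/-- ψ_x(w) = ∏_{k=0}^{x} λ(k)/(λ(k)−w). -/
noncomputable def psiF (lam : ℕ → ℝ) (x : ℕ) (w : ℂ) : ℂ :=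
  ∏ k ∈ Finset.range (x + 1), (lam k : ℂ) / ((lam k : ℂ) - w)

/-- p_x(w) = ∏_{k=0}^{x−1} (λ(k)−w)/λ(k). -/
noncomputable def pF (lam : ℕ → ℝ) (x : ℕ) (w : ℂ) : ℂ :=
  ∏ k ∈ Finset.range x, (((lam k : ℂ) - w) / (lam k : ℂ))

/-- e^{tL}(x,y) := −(1/λ(y))·(1/(2πi)) ∮_{|w|=R} ψ_y(w) p_x(w) e^{−tw} dw,
the contour being the counterclockwise circle of radius R centred at 0. -/
noncomputable def eL (lam : ℕ → ℝ) (R t : ℝ) (x y : ℕ) : ℂ :=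
  -(1 / (lam y : ℂ)) * ((2 * (Real.pi : ℂ) * Complex.I)⁻¹ *
    ∮ w in C(0, R), psiF lam y w * pF lam x w * Complex.exp (-(t : ℂ) * w))

/-- y ≺ x : interlacing, x_1 ≤ y_1 < x_2 ≤ y_2 < ⋯ ≤ y_N < x_{N+1}.
(Membership of (y,x) in W^{N,N+1} is exactly this condition.) -/
def Interlace {N : ℕ} (y : Fin N → ℕ) (x : Fin (N + 1) → ℕ) : Prop :=
  ∀ i : Fin N, x i.castSucc ≤ y i ∧ y i < x i.succ

instance {N : ℕ} (y : Fin N → ℕ) (x : Fin (N + 1) → ℕ) : Decidable (Interlace y x) :=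
  inferInstanceAs (Decidable (∀ i : Fin N, x i.castSucc ≤ y i ∧ y i < x i.succ))

/-- The two-level Karlin–McGregor block determinant kernel
U_t^{N,N+1}[(y,x),(y',x')] = det [[A, B],[C, D]] with
A_{ij} = e^{tL}(x_i,x'_j), B_{ij} = λ(y'_j)⁻¹ (Σ_{z=0}^{y'_j} e^{tL}(x_i,z) − 1(j ≥ i)),
C_{ij} = λ(y_i)(e^{tL}(y_i,x'_j) − e^{tL}(y_i+1,x'_j)), D_{ij} = e^{tL}(y_i,y'_j). -/
noncomputable def Ut (lam : ℕ → ℝ) (R t : ℝ) (N : ℕ)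
    (y : Fin N → ℕ) (x : Fin (N + 1) → ℕ)
    (y' : Fin N → ℕ) (x' : Fin (N + 1) → ℕ) : ℂ :=
  (Matrix.fromBlocks
    (Matrix.of fun i j => eL lam R t (x i) (x' j))
    (Matrix.of fun (i : Fin (N + 1)) (j : Fin N) =>
      (1 / (lam (y' j) : ℂ)) *
        ((∑ z ∈ Finset.range (y' j + 1), eL lam R t (x i) z)
          - if (i : ℕ) ≤ (j : ℕ) then 1 else 0))
    (Matrix.of fun (i : Fin N) (j : Fin (N + 1)) =>
      (lam (y i) : ℂ) * (eL lam R t (y i) (x' j) - eL lam R t (y i + 1) (x' j)))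
    (Matrix.of fun i j => eL lam R t (y i) (y' j))).det

/-- The integrand of the tail probability `birthTail`. -/
noncomputable def tailFn (lam : ℕ → ℝ) (t : ℝ) (x m : ℕ) (w : ℂ) : ℂ :=
  (∏ k ∈ Finset.range m, (lam k : ℂ) / ((lam k : ℂ) - w)) * pF lam x w *
    Complex.exp (-(t : ℂ) * w) / w

/-- The contour integral giving the probability that the pure birth chain with rates `lam`
started from `x` is at height at least `m` at time `t`. -/
noncomputable def birthTail (lam : ℕ → ℝ) (R t : ℝ) (x m : ℕ) : ℂ :=
  (2 * (Real.pi : ℂ) * Complex.I)⁻¹ * ∮ w in C(0, R), tailFn lam t x m w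

section Tail

variable {lam : ℕ → ℝ} {M R : ℝ}

theorem rate_sub_ne_zero (h0 : ∀ k, 0 < lam k) (hub : ∀ k, lam k ≤ M) {w : ℂ} (hw : M < ‖w‖)
    (k : ℕ) : (lam k : ℂ) - w ≠ 0 := by
  intro h
  have h1 : ‖w‖ = lam k := by
    rw [← sub_eq_zero.1 h, Complex.norm_real, Real.norm_of_nonneg (h0 k).le]
  linarith [hub k]

theorem differentiable_pF (lam : ℕ → ℝ) (x : ℕ) : Differentiable ℂ (pF lam x) := by
  unfold pF
  fun_prop

theorem differentiableOn_tailFn (h0 : ∀ k, 0 < lam k) (hub : ∀ k, lam k ≤ M) (t : ℝ) (x m : ℕ) :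
    DifferentiableOn ℂ (tailFn lam t x m) {w | M < ‖w‖} := by
  intro w hw
  have hw0 : w ≠ 0 := norm_pos_iff.1 ((h0 0).trans_le (hub 0) |>.trans hw)
  have h1 : DifferentiableAt ℂ
      (fun w : ℂ => ∏ k ∈ Finset.range m, (lam k : ℂ) / ((lam k : ℂ) - w)) w :=
    DifferentiableAt.fun_finsetProd fun k _ =>
      (differentiableAt_const _).div (by fun_prop) (rate_sub_ne_zero h0 hub hw k)
  have h2 := differentiable_pF lam x w
  unfold tailFn
  exact (((h1.mul h2).mul (by fun_prop)).div differentiableAt_id hw0).differentiableWithinAt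

theorem continuousOn_tailFn (h0 : ∀ k, 0 < lam k) (hub : ∀ k, lam k ≤ M) (hR : M < R)
    (t : ℝ) (x m : ℕ) : ContinuousOn (tailFn lam t x m) (Metric.sphere 0 R) :=
  (differentiableOn_tailFn h0 hub t x m).continuousOn.mono fun w hw => by
    simpa [mem_sphere_zero_iff_norm.1 hw] using hR

theorem circleIntegrable_tailFn (h0 : ∀ k, 0 < lam k) (hub : ∀ k, lam k ≤ M) (hR : M < R)
    (t : ℝ) (x m : ℕ) : CircleIntegrable (tailFn lam t x m) 0 R :=
  (continuousOn_tailFn h0 hub hR t x m).circleIntegrable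
    (((h0 0).trans_le (hub 0)).trans hR).le

theorem birthTail_eq_of_lt (h0 : ∀ k, 0 < lam k) (hub : ∀ k, lam k ≤ M) {R' : ℝ} (hR : M < R)
    (hR' : M < R') (t : ℝ) (x m : ℕ) : birthTail lam R t x m = birthTail lam R' t x m := by
  wlog hle : R ≤ R' generalizing R R'
  · exact (this hR' hR (le_of_not_ge hle)).symm
  have hM := (h0 0).trans_le (hub 0)
  have hd := differentiableOn_tailFn h0 hub t x m
  have ho : IsOpen {w : ℂ | M < ‖w‖} := isOpen_lt continuous_const continuous_norm
  unfold birthTail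
  congr 1
  refine (Complex.circleIntegral_eq_of_differentiable_on_annulus_off_countable (hM.trans hR) hle
    Set.countable_empty (hd.continuousOn.mono ?_) fun z hz => ?_).symm
  · intro z hz
    have : R ≤ ‖z‖ := by simpa using hz.2
    exact hR.trans_le this
  · have : R < ‖z‖ := by simpa using hz.1.2
    exact hd.differentiableAt (ho.mem_nhds (hR.trans this))

theorem circleIntegral_div_id_of_differentiable {f : ℂ → ℂ} (hf : Differentiable ℂ f)
    (hR : 0 < R) : (2 * (Real.pi : ℂ) * Complex.I)⁻¹ * ∮ w in C(0, R), f w / w = f 0 := by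
  have := (hf.differentiableOn (s := Metric.closedBall 0 R)).circleIntegral_sub_inv_smul
    (Metric.mem_ball_self hR)
  have h2 : (∮ w in C(0, R), f w / w) = (2 * (Real.pi : ℂ) * Complex.I) • f 0 := by
    rw [← this]
    congr 1
    ext w
    simp [div_eq_inv_mul]
  rw [h2, smul_eq_mul, inv_mul_cancel_left₀ (by simp [Real.pi_ne_zero])]

theorem prod_rate_mul_pF_of_le (h0 : ∀ k, 0 < lam k) {w : ℂ} (hw : ∀ k, (lam k : ℂ) - w ≠ 0)
    {x m : ℕ} (hmx : m ≤ x) :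
    (∏ k ∈ Finset.range m, (lam k : ℂ) / ((lam k : ℂ) - w)) * pF lam x w =
      ∏ k ∈ Finset.Ico m x, ((lam k : ℂ) - w) / (lam k : ℂ) := by
  rw [pF, ← Finset.prod_range_mul_prod_Ico _ hmx, ← mul_assoc, ← Finset.prod_mul_distrib,
    Finset.prod_eq_one, one_mul]
  intro k _
  have := hw k
  have : (lam k : ℂ) ≠ 0 := by exact_mod_cast (h0 k).ne'
  field_simp

theorem prod_rate_mul_pF_of_ge (h0 : ∀ k, 0 < lam k) {w : ℂ} (hw : ∀ k, (lam k : ℂ) - w ≠ 0)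
    {x m : ℕ} (hxm : x ≤ m) :
    (∏ k ∈ Finset.range m, (lam k : ℂ) / ((lam k : ℂ) - w)) * pF lam x w =
      ∏ k ∈ Finset.Ico x m, (lam k : ℂ) / ((lam k : ℂ) - w) := by
  rw [pF, ← Finset.prod_range_mul_prod_Ico _ hxm, mul_right_comm, ← Finset.prod_mul_distrib,
    Finset.prod_eq_one, one_mul]
  intro k _
  have := hw k
  have : (lam k : ℂ) ≠ 0 := by exact_mod_cast (h0 k).ne'
  field_simp

theorem birthTail_of_le (h0 : ∀ k, 0 < lam k) (hub : ∀ k, lam k ≤ M) (hR : M < R)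
    (t : ℝ) {x m : ℕ} (hmx : m ≤ x) : birthTail lam R t x m = 1 := by
  have hR0 := ((h0 0).trans_le (hub 0)).trans hR
  have key := circleIntegral_div_id_of_differentiable (R := R)
    (f := fun w => (∏ k ∈ Finset.Ico m x, ((lam k : ℂ) - w) / (lam k : ℂ)) *
      Complex.exp (-(t : ℂ) * w)) (by fun_prop) hR0
  have hone : (∏ k ∈ Finset.Ico m x, ((lam k : ℂ) - 0) / (lam k : ℂ)) = 1 :=
    Finset.prod_eq_one fun k _ => by
      have : (lam k : ℂ) ≠ 0 := by exact_mod_cast (h0 k).ne'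
      rw [sub_zero, div_self this]
  rw [hone, mul_zero, Complex.exp_zero, one_mul] at key
  rw [← key, birthTail]
  congr 1
  refine circleIntegral.integral_congr hR0.le fun w hw => ?_
  have hw' : M < ‖w‖ := by rwa [mem_sphere_zero_iff_norm.1 hw]
  simp only [tailFn]
  rw [prod_rate_mul_pF_of_le h0 (rate_sub_ne_zero h0 hub hw') hmx]

theorem norm_rate_div_le (h0 : ∀ k, 0 < lam k) (hub : ∀ k, lam k ≤ M) {w : ℂ} (hw : M < ‖w‖)
    (k : ℕ) : ‖(lam k : ℂ) / ((lam k : ℂ) - w)‖ ≤ M / (‖w‖ - M) := by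
  have hM := (h0 0).trans_le (hub 0)
  have h1 : ‖(lam k : ℂ)‖ = lam k := by rw [Complex.norm_real, Real.norm_of_nonneg (h0 k).le]
  rw [norm_div, h1]
  refine div_le_div₀ hM.le (hub k) (by linarith) ?_
  have := norm_sub_norm_le w (lam k : ℂ)
  rw [norm_sub_rev] at this
  linarith [hub k]

theorem norm_prod_rate_div_le (h0 : ∀ k, 0 < lam k) (hub : ∀ k, lam k ≤ M) {w : ℂ}
    (hw : M < ‖w‖) (A : Finset ℕ) :
    ‖∏ k ∈ A, (lam k : ℂ) / ((lam k : ℂ) - w)‖ ≤ (M / (‖w‖ - M)) ^ A.card := by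
  rw [norm_prod, ← Finset.prod_const]
  exact Finset.prod_le_prod (fun _ _ => norm_nonneg _) fun k _ => norm_rate_div_le h0 hub hw k

theorem birthTail_zero_of_lt (h0 : ∀ k, 0 < lam k) (hub : ∀ k, lam k ≤ M) (hR : M < R)
    {x m : ℕ} (hxm : x < m) : birthTail lam R 0 x m = 0 := by
  have hM := (h0 0).trans_le (hub 0)
  have bound : ∀ ε : ℝ, 0 < ε → ‖birthTail lam R 0 x m‖ ≤ ε ^ (m - x) := by
    intro ε hε
    have hR' : M < M + M / ε := by linarith [div_pos hM hε]
    have hR0 := hM.trans hR'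
    rw [birthTail_eq_of_lt h0 hub hR hR']
    have := circleIntegral.norm_two_pi_i_inv_smul_integral_le_of_norm_le_const (c := 0)
      (f := tailFn lam 0 x m) (C := ε ^ (m - x) / (M + M / ε)) hR0.le fun w hw => by
        have hn := mem_sphere_zero_iff_norm.1 hw
        have hw' : M < ‖w‖ := by rwa [hn]
        rw [tailFn, prod_rate_mul_pF_of_ge h0 (rate_sub_ne_zero h0 hub hw') hxm.le]
        simp only [Complex.ofReal_zero, neg_zero, zero_mul, Complex.exp_zero, mul_one, norm_div, hn]
        gcongr
        refine (norm_prod_rate_div_le h0 hub hw' _).trans (le_of_eq ?_)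
        rw [hn, Nat.card_Ico]
        congr 1
        field_simp
        ring
    rwa [mul_div_cancel₀ _ hR0.ne', smul_eq_mul] at this
  rw [← norm_le_zero_iff]
  refine le_of_forall_pos_le_add fun ε hε => ?_
  refine (bound (min ε 1) (by positivity)).trans ?_
  rw [zero_add]
  exact (pow_le_of_le_one (by positivity) (min_le_right _ _) (by omega)).trans (min_le_left _ _)

theorem exists_norm_birthTail_le (h0 : ∀ k, 0 < lam k) (hub : ∀ k, lam k ≤ M) (hR : M < R)
    (t : ℝ) (x : ℕ) : ∃ C, 0 ≤ C ∧ ∀ m, ‖birthTail lam R t x m‖ ≤ C * (1 / 4) ^ m := by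
  have hM := (h0 0).trans_le (hub 0)
  have hR' : M < 5 * M := by linarith
  have hR0 : 0 < 5 * M := by linarith
  obtain ⟨C, hC⟩ := (isCompact_sphere (0 : ℂ) (5 * M)).exists_bound_of_continuousOn
    (continuousOn_tailFn h0 hub hR' t x 0)
  have hC0 : 0 ≤ C := (norm_nonneg _).trans (hC ((5 * M : ℝ) : ℂ) (by
    rw [mem_sphere_zero_iff_norm, Complex.norm_real, Real.norm_of_nonneg hR0.le]))
  refine ⟨5 * M * C, by positivity, fun m => ?_⟩
  rw [birthTail_eq_of_lt h0 hub hR hR', mul_assoc (5 * M)]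
  refine circleIntegral.norm_two_pi_i_inv_smul_integral_le_of_norm_le_const (c := 0)
    (f := tailFn lam t x m) hR0.le fun w hw => ?_
  have hn := mem_sphere_zero_iff_norm.1 hw
  have hw' : M < ‖w‖ := by rwa [hn]
  have h1 : tailFn lam t x m w =
      tailFn lam t x 0 w * ∏ k ∈ Finset.range m, (lam k : ℂ) / ((lam k : ℂ) - w) := by
    simp only [tailFn, Finset.range_zero, Finset.prod_empty]
    ring
  rw [h1, norm_mul]
  refine mul_le_mul (hC w hw) ?_ (norm_nonneg _) hC0
  refine (norm_prod_rate_div_le h0 hub hw' _).trans (le_of_eq ?_)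
  rw [hn, Finset.card_range]
  congr 1
  field_simp
  norm_num

theorem tendsto_birthTail (h0 : ∀ k, 0 < lam k) (hub : ∀ k, lam k ≤ M) (hR : M < R)
    (t : ℝ) (x : ℕ) :
    Filter.Tendsto (birthTail lam R t x) Filter.atTop (nhds 0) := by
  obtain ⟨C, -, hC⟩ := exists_norm_birthTail_le h0 hub hR t x
  refine squeeze_zero_norm hC ?_
  simpa using (tendsto_pow_atTop_nhds_zero_of_lt_one (by norm_num : (0 : ℝ) ≤ 1 / 4)
    (by norm_num)).const_mul C

theorem eL_eq_birthTail_sub (h0 : ∀ k, 0 < lam k) (hub : ∀ k, lam k ≤ M) (hR : M < R)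
    (t : ℝ) (x y : ℕ) :
    eL lam R t x y = birthTail lam R t x y - birthTail lam R t x (y + 1) := by
  have hR0 := ((h0 0).trans_le (hub 0)).trans hR
  have hy : (lam y : ℂ) ≠ 0 := by exact_mod_cast (h0 y).ne'
  rw [birthTail, birthTail, ← mul_sub, ← circleIntegral.integral_sub
    (circleIntegrable_tailFn h0 hub hR t x y) (circleIntegrable_tailFn h0 hub hR t x (y + 1)), eL,
    mul_left_comm, ← circleIntegral.integral_const_mul]
  congr 1
  refine circleIntegral.integral_congr hR0.le fun w hw => ?_
  have hw' : M < ‖w‖ := by rwa [mem_sphere_zero_iff_norm.1 hw]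
  have hw0 : w ≠ 0 := norm_pos_iff.1 ((h0 0).trans_le (hub 0) |>.trans hw')
  have := rate_sub_ne_zero h0 hub hw' y
  simp only [tailFn, psiF, Finset.prod_range_succ]
  field_simp
  ring

theorem birthTail_succ_sub (h0 : ∀ k, 0 < lam k) (hub : ∀ k, lam k ≤ M) (hR : M < R)
    (t : ℝ) (x m : ℕ) :
    (lam x : ℂ) * (birthTail lam R t (x + 1) m - birthTail lam R t x m) =
      (2 * (Real.pi : ℂ) * Complex.I)⁻¹ * ∮ w in C(0, R), -w * tailFn lam t x m w := by
  have hR0 := ((h0 0).trans_le (hub 0)).trans hR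
  have hx : (lam x : ℂ) ≠ 0 := by exact_mod_cast (h0 x).ne'
  rw [birthTail, birthTail, ← mul_sub, ← circleIntegral.integral_sub
    (circleIntegrable_tailFn h0 hub hR t (x + 1) m) (circleIntegrable_tailFn h0 hub hR t x m),
    mul_left_comm, ← circleIntegral.integral_const_mul]
  congr 1
  refine circleIntegral.integral_congr hR0.le fun w hw => ?_
  have hw' : M < ‖w‖ := by rwa [mem_sphere_zero_iff_norm.1 hw]
  have hw0 : w ≠ 0 := norm_pos_iff.1 ((h0 0).trans_le (hub 0) |>.trans hw')
  simp only [tailFn, pF, Finset.prod_range_succ]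
  field_simp
  ring

theorem rate_mul_birthTail_sub_succ (h0 : ∀ k, 0 < lam k) (hub : ∀ k, lam k ≤ M) (hR : M < R)
    (t : ℝ) (x y : ℕ) :
    (lam x : ℂ) * (birthTail lam R t (x + 1) (y + 1) - birthTail lam R t x (y + 1)) =
      (lam y : ℂ) * eL lam R t x y := by
  have hR0 := ((h0 0).trans_le (hub 0)).trans hR
  have hy : (lam y : ℂ) ≠ 0 := by exact_mod_cast (h0 y).ne'
  have h1 : (lam y : ℂ) * -(1 / (lam y : ℂ)) = -1 := by field_simp
  rw [birthTail_succ_sub h0 hub hR, eL, ← mul_assoc, h1, mul_left_comm,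
    ← circleIntegral.integral_const_mul (-1)]
  refine congrArg _ (circleIntegral.integral_congr hR0.le fun w hw => ?_)
  have hw' : M < ‖w‖ := by rwa [mem_sphere_zero_iff_norm.1 hw]
  have hw0 : w ≠ 0 := norm_pos_iff.1 ((h0 0).trans_le (hub 0) |>.trans hw')
  simp only [tailFn, psiF]
  field_simp

theorem sum_range_eL (h0 : ∀ k, 0 < lam k) (hub : ∀ k, lam k ≤ M) (hR : M < R)
    (t : ℝ) (x m : ℕ) :
    ∑ z ∈ Finset.range m, eL lam R t x z = 1 - birthTail lam R t x m := by
  simp only [eL_eq_birthTail_sub h0 hub hR]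
  rw [Finset.sum_range_sub', birthTail_of_le h0 hub hR t (Nat.zero_le x)]

theorem hasDerivAt_birthTail (h0 : ∀ k, 0 < lam k) (hub : ∀ k, lam k ≤ M) (hR : M < R)
    (t : ℝ) (x m : ℕ) :
    HasDerivAt (fun t => birthTail lam R t x m)
      ((lam x : ℂ) * (birthTail lam R t (x + 1) m - birthTail lam R t x m)) t := by
  have hR0 := ((h0 0).trans_le (hub 0)).trans hR
  rw [birthTail_succ_sub h0 hub hR]
  refine HasDerivAt.const_mul _ ?_
  have hcirc : ∀ θ, circleMap 0 R θ ∈ Metric.sphere (0 : ℂ) R := circleMap_mem_sphere 0 hR0.le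
  have hcont : ∀ t, Continuous fun θ => tailFn lam t x m (circleMap 0 R θ) := fun t =>
    (continuousOn_tailFn h0 hub hR t x m).comp_continuous (continuous_circleMap 0 R) hcirc
  have hd : Continuous fun θ => deriv (circleMap 0 R) θ := by
    simp only [deriv_circleMap]
    fun_prop
  have hsplit : ∀ t w, tailFn lam t x m w = tailFn lam 0 x m w * Complex.exp (-(t : ℂ) * w) := by
    intro t w
    simp only [tailFn, Complex.ofReal_zero, neg_zero, zero_mul, Complex.exp_zero]
    ring
  simp only [circleIntegral]
  have hF : ∀ s, Continuous fun θ =>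
      deriv (circleMap 0 R) θ • tailFn lam s x m (circleMap 0 R θ) := fun s => hd.smul (hcont s)
  have hF' : ∀ s, Continuous fun θ => deriv (circleMap 0 R) θ •
      (-circleMap 0 R θ * tailFn lam s x m (circleMap 0 R θ)) := fun s =>
    hd.smul ((continuous_circleMap 0 R).neg.mul (hcont s))
  refine (intervalIntegral.hasDerivAt_integral_of_dominated_loc_of_deriv_le
    (F' := fun s θ => deriv (circleMap 0 R) θ •
      (-circleMap 0 R θ * tailFn lam s x m (circleMap 0 R θ)))
    (bound := fun θ => ‖deriv (circleMap 0 R) θ‖ *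
      (R * (‖tailFn lam 0 x m (circleMap 0 R θ)‖ * Real.exp ((|t| + 1) * R))))
    (Metric.ball_mem_nhds t one_pos)
    (Filter.Eventually.of_forall fun s => (hF s).aestronglyMeasurable)
    ((hF t).intervalIntegrable _ _) (hF' t).aestronglyMeasurable
    (Filter.Eventually.of_forall fun θ _ s hs => ?_)
    (Continuous.intervalIntegrable (by have := hcont 0; fun_prop) _ _)
    (Filter.Eventually.of_forall fun θ _ s _ => ?_)).2
  · have hn : ‖circleMap 0 R θ‖ = R := mem_sphere_zero_iff_norm.1 (hcirc θ)
    have hs' : |s| ≤ |t| + 1 := by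
      have h1 : |s - t| < 1 := by simpa [Real.dist_eq] using hs
      have h2 := abs_add_le (s - t) t
      rw [sub_add_cancel] at h2
      linarith
    rw [norm_smul, norm_mul, norm_neg, hn, hsplit, norm_mul]
    gcongr
    refine (Complex.norm_exp_le_exp_norm _).trans ?_
    rw [norm_mul, norm_neg, Complex.norm_real, hn, Real.norm_eq_abs]
    gcongr
  · rw [hsplit s]
    conv => enter [1, s]; rw [hsplit s]
    have h1 : HasDerivAt (fun s : ℝ => -(s : ℂ) * circleMap 0 R θ)
        (-1 * circleMap 0 R θ) s :=
      (Complex.ofRealCLM.hasDerivAt (x := s)).neg.mul_const _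
    refine (((h1.cexp).const_mul (tailFn lam 0 x m (circleMap 0 R θ))).const_mul
      (deriv (circleMap 0 R) θ)).congr_deriv ?_
    rw [smul_eq_mul]
    ring

theorem hasDerivAt_eL (h0 : ∀ k, 0 < lam k) (hub : ∀ k, lam k ≤ M) (hR : M < R)
    (t : ℝ) (x y : ℕ) :
    HasDerivAt (fun t => eL lam R t x y)
      ((lam x : ℂ) * (eL lam R t (x + 1) y - eL lam R t x y)) t := by
  simp only [eL_eq_birthTail_sub h0 hub hR]
  exact ((hasDerivAt_birthTail h0 hub hR t x y).sub
    (hasDerivAt_birthTail h0 hub hR t x (y + 1))).congr_deriv (by ring)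

theorem eL_of_lt (h0 : ∀ k, 0 < lam k) (hub : ∀ k, lam k ≤ M) (hR : M < R)
    (t : ℝ) {x y : ℕ} (hyx : y < x) : eL lam R t x y = 0 := by
  rw [eL_eq_birthTail_sub h0 hub hR, birthTail_of_le h0 hub hR t hyx.le,
    birthTail_of_le h0 hub hR t hyx, sub_self]

theorem eL_zero (h0 : ∀ k, 0 < lam k) (hub : ∀ k, lam k ≤ M) (hR : M < R) (x y : ℕ) :
    eL lam R 0 x y = if x = y then 1 else 0 := by
  rcases lt_trichotomy x y with h | rfl | h
  · rw [if_neg h.ne, eL_eq_birthTail_sub h0 hub hR, birthTail_zero_of_lt h0 hub hR h,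
      birthTail_zero_of_lt h0 hub hR (h.trans y.lt_succ_self), sub_self]
  · rw [if_pos rfl, eL_eq_birthTail_sub h0 hub hR, birthTail_of_le h0 hub hR 0 le_rfl,
      birthTail_zero_of_lt h0 hub hR x.lt_succ_self, sub_zero]
  · rw [if_neg h.ne', eL_of_lt h0 hub hR 0 h]

theorem hasDerivAt_exp_mul_of_linear {a : ℝ → ℝ} {c b t : ℝ}
    (ha : HasDerivAt a (c * (b - a t)) t) :
    HasDerivAt (fun t => Real.exp (c * t) * a t) (Real.exp (c * t) * (c * b)) t := by
  exact ((((hasDerivAt_id t).const_mul c).exp).mul ha).congr_deriv (by simp only [id]; ring)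

theorem eL_im (h0 : ∀ k, 0 < lam k) (hub : ∀ k, lam k ≤ M) (hR : M < R)
    (t : ℝ) (x y : ℕ) : (eL lam R t x y).im = 0 := by
  suffices H : ∀ n x, y + 1 ≤ x + n → ∀ t, (eL lam R t x y).im = 0 from
    H (y + 1) x (by omega) t
  intro n
  induction n with
  | zero =>
    intro x hx t
    rw [eL_of_lt h0 hub hR t (by omega), Complex.zero_im]
  | succ n ih =>
    intro x hx t
    have hd : ∀ t, HasDerivAt (fun t => Real.exp (lam x * t) * (eL lam R t x y).im) 0 t := by
      intro t
      convert hasDerivAt_exp_mul_of_linear (b := (eL lam R t (x + 1) y).im) (c := lam x)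
        (a := fun t => (eL lam R t x y).im) ?_ using 1
      · rw [ih (x + 1) (by omega), mul_zero, mul_zero]
      · have : HasDerivAt (fun t => (eL lam R t x y).im) _ t :=
          Complex.imCLM.hasFDerivAt.comp_hasDerivAt t (hasDerivAt_eL h0 hub hR t x y)
        exact this.congr_deriv (by simp)
    have h1 := is_const_of_deriv_eq_zero (fun t => (hd t).differentiableAt)
      (fun t => (hd t).deriv) t 0
    have h2 : (eL lam R 0 x y).im = 0 := by
      rw [eL_zero h0 hub hR]
      split_ifs <;> simp
    simpa [h2, (Real.exp_pos _).ne'] using h1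

theorem eL_re_nonneg (h0 : ∀ k, 0 < lam k) (hub : ∀ k, lam k ≤ M) (hR : M < R)
    {t : ℝ} (ht : 0 ≤ t) (x y : ℕ) : 0 ≤ (eL lam R t x y).re := by
  suffices H : ∀ n x, y + 1 ≤ x + n → ∀ t, 0 ≤ t → 0 ≤ (eL lam R t x y).re from
    H (y + 1) x (by omega) t ht
  intro n
  induction n with
  | zero =>
    intro x hx t _
    rw [eL_of_lt h0 hub hR t (by omega), Complex.zero_re]
  | succ n ih =>
    intro x hx t ht
    have hd : ∀ t, HasDerivAt (fun t => Real.exp (lam x * t) * (eL lam R t x y).re)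
        (Real.exp (lam x * t) * (lam x * (eL lam R t (x + 1) y).re)) t := by
      intro t
      refine hasDerivAt_exp_mul_of_linear (a := fun t => (eL lam R t x y).re) ?_
      have : HasDerivAt (fun t => (eL lam R t x y).re) _ t :=
          Complex.reCLM.hasFDerivAt.comp_hasDerivAt t (hasDerivAt_eL h0 hub hR t x y)
      exact this.congr_deriv (by simp)
    have hmono := monotoneOn_of_deriv_nonneg (convex_Ici (0 : ℝ))
      (fun t _ => (hd t).continuousAt.continuousWithinAt)
      (fun t _ => (hd t).differentiableAt.differentiableWithinAt) (fun t ht => by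
        rw [interior_Ici] at ht
        rw [(hd t).deriv]
        have := ih (x + 1) (by omega) t (le_of_lt ht)
        have := (h0 x).le
        positivity)
    have h1 := hmono Set.self_mem_Ici (Set.mem_Ici.2 ht) ht
    have h2 : 0 ≤ (eL lam R 0 x y).re := by
      rw [eL_zero h0 hub hR]
      split_ifs <;> simp
    simp only [mul_zero, Real.exp_zero, one_mul] at h1
    exact nonneg_of_mul_nonneg_right (h2.trans h1) (Real.exp_pos _)

theorem ofReal_eL_re (h0 : ∀ k, 0 < lam k) (hub : ∀ k, lam k ≤ M) (hR : M < R)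
    (t : ℝ) (x y : ℕ) : ((eL lam R t x y).re : ℂ) = eL lam R t x y :=
  Complex.ext rfl (by rw [Complex.ofReal_im, eL_im h0 hub hR])

theorem sum_range_eL_re_le_one (h0 : ∀ k, 0 < lam k) (hub : ∀ k, lam k ≤ M) (hR : M < R)
    {t : ℝ} (ht : 0 ≤ t) (x m : ℕ) : ∑ z ∈ Finset.range m, (eL lam R t x z).re ≤ 1 := by
  have hmono : Monotone fun m => ∑ z ∈ Finset.range m, (eL lam R t x z).re :=
    monotone_nat_of_le_succ fun m => by
      rw [Finset.sum_range_succ]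
      exact le_add_of_nonneg_right (eL_re_nonneg h0 hub hR ht x m)
  have hlim : Filter.Tendsto (fun m => ∑ z ∈ Finset.range m, (eL lam R t x z).re)
      Filter.atTop (nhds 1) := by
    have := (Complex.continuous_re.tendsto _).comp
      ((tendsto_birthTail h0 hub hR t x).const_sub 1)
    simp only [sub_zero, Complex.one_re] at this
    refine this.congr fun m => ?_
    rw [Function.comp_apply, ← sum_range_eL h0 hub hR, Complex.re_sum]
  exact hmono.ge_of_tendsto hlim m

theorem exists_norm_eL_le (h0 : ∀ k, 0 < lam k) (hub : ∀ k, lam k ≤ M) (hR : M < R)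
    (t : ℝ) (x : ℕ) : ∃ C, 0 ≤ C ∧ ∀ y, ‖eL lam R t x y‖ ≤ C * (1 / 4) ^ y := by
  obtain ⟨C, hC0, hC⟩ := exists_norm_birthTail_le h0 hub hR t x
  refine ⟨C + C, by positivity, fun y => ?_⟩
  rw [eL_eq_birthTail_sub h0 hub hR, add_mul]
  refine (norm_sub_le _ _).trans (add_le_add (hC y) ((hC (y + 1)).trans ?_))
  exact mul_le_mul_of_nonneg_left
    (pow_le_pow_of_le_one (by norm_num) (by norm_num) y.le_succ) hC0

end Tail

theorem Interlace.strictMono {N : ℕ} {y : Fin N → ℕ} {x : Fin (N + 1) → ℕ} (h : Interlace y x) :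
    StrictMono y := by
  cases N with
  | zero => exact fun i => i.elim0
  | succ n =>
    refine Fin.strictMono_iff_lt_succ.2 fun i => (h i.castSucc).2.trans_le ?_
    rw [Fin.succ_castSucc]
    exact (h i.succ).1

theorem Interlace.strictMono_upper {N : ℕ} {y : Fin N → ℕ} {x : Fin (N + 1) → ℕ}
    (h : Interlace y x) : StrictMono x :=
  Fin.strictMono_iff_lt_succ.2 fun i => (h i).1.trans_lt (h i).2

theorem tendsto_piFinset_range {ι : Type*} [Fintype ι] [DecidableEq ι] :
    Filter.Tendsto (fun m : ℕ => Fintype.piFinset fun _ : ι => Finset.range m) Filter.atTop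
      Filter.atTop := by
  refine Filter.tendsto_atTop_finset_of_monotone
    (fun m n h => Fintype.piFinset_subset _ _ fun _ => Finset.range_mono h)
    fun z => ⟨Finset.univ.sup z + 1, Fintype.mem_piFinset.2 fun i => ?_⟩
  exact Finset.mem_range.2 (Nat.lt_succ_of_le (Finset.le_sup (Finset.mem_univ i)))

theorem sum_prod_le_prod {ι : Type*} [Fintype ι] [DecidableEq ι] {f : ι → ℕ → ℝ} {c : ι → ℝ}
    (hf : ∀ i z, 0 ≤ f i z) (hc : ∀ i m, ∑ z ∈ Finset.range m, f i z ≤ c i)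
    (A : Finset (ι → ℕ)) : ∑ z ∈ A, ∏ i, f i (z i) ≤ ∏ i, c i := by
  let m := (A.sup fun z => Finset.univ.sup z) + 1
  have hA : A ⊆ Fintype.piFinset fun _ => Finset.range m := by
    intro z hz
    refine Fintype.mem_piFinset.2 fun i => Finset.mem_range.2 (Nat.lt_succ_of_le ?_)
    exact (Finset.le_sup (f := z) (Finset.mem_univ i)).trans
      (Finset.le_sup (f := fun z : ι → ℕ => Finset.univ.sup z) hz)
  calc ∑ z ∈ A, ∏ i, f i (z i)
      ≤ ∑ z ∈ Fintype.piFinset fun _ => Finset.range m, ∏ i, f i (z i) :=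
        Finset.sum_le_sum_of_subset_of_nonneg hA fun z _ _ => Finset.prod_nonneg fun i _ => hf i _
    _ = ∏ i, ∑ z ∈ Finset.range m, f i z := (Finset.prod_univ_sum _ _).symm
    _ ≤ ∏ i, c i := Finset.prod_le_prod (fun i _ => Finset.sum_nonneg fun z _ => hf i z)
        fun i _ => hc i m

theorem summable_prod_pow (n : ℕ) :
    Summable fun z : Fin n → ℕ => ∏ i, (1 / 2 : ℝ) ^ z i :=
  summable_of_sum_le (fun z => by positivity) fun A =>
    sum_prod_le_prod (f := fun _ z => (1 / 2 : ℝ) ^ z) (c := fun _ => 2)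
      (fun _ z => by positivity) (fun _ m => by
        exact (summable_geometric_two.sum_le_tsum _ fun _ _ => by positivity).trans_eq
          tsum_geometric_two) A

/-- Sums over ordered configurations of minors of a substochastic matrix are at most one. -/
theorem sum_det_le_one {N : ℕ} {f : Fin N → ℕ → ℝ} (hf : ∀ i z, 0 ≤ f i z)
    (hc : ∀ i m, ∑ z ∈ Finset.range m, f i z ≤ 1) (A : Finset (Fin N → ℕ))
    (hA : ∀ y ∈ A, StrictMono y) :
    ∑ y ∈ A, (Matrix.of fun i j => f i (y j)).det ≤ 1 := by
  classical
  have hinj : Set.InjOn (fun p : (Fin N → ℕ) × Equiv.Perm (Fin N) => p.1 ∘ p.2)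
      (A ×ˢ (Finset.univ : Finset (Equiv.Perm (Fin N))) : Finset _) := by
    rintro ⟨y, σ⟩ hy ⟨y', τ⟩ hy' h
    simp only [Finset.coe_product, Set.mem_prod, Finset.mem_coe] at hy hy'
    simp only at h
    have hyy : y = y' := by
      refine ((hA y hy.1).range_inj (hA y' hy'.1)).1 ?_
      rw [← σ.surjective.range_comp y, h, τ.surjective.range_comp y']
    subst hyy
    refine Prod.ext rfl (Equiv.ext fun i => (hA y hy.1).injective ?_)
    exact congrFun h i
  calc ∑ y ∈ A, (Matrix.of fun i j => f i (y j)).det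
      ≤ ∑ y ∈ A, ∑ σ : Equiv.Perm (Fin N), ∏ i, f i (y (σ i)) := by
        refine Finset.sum_le_sum fun y _ => ?_
        rw [← Matrix.det_transpose, Matrix.det_apply]
        refine Finset.sum_le_sum fun σ _ => ?_
        have h0 : 0 ≤ ∏ i, f i (y (σ i)) := Finset.prod_nonneg fun i _ => hf i _
        rcases Int.units_eq_one_or (Equiv.Perm.sign σ) with h | h <;>
          simp only [h, Matrix.transpose_apply, Matrix.of_apply, one_smul, Units.neg_smul]
        · exact le_rfl
        · linarith
    _ = ∑ z ∈ (A ×ˢ (Finset.univ : Finset (Equiv.Perm (Fin N)))).image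
          (fun p : (Fin N → ℕ) × Equiv.Perm (Fin N) => p.1 ∘ p.2), ∏ i, f i (z i) := by
        rw [Finset.sum_image hinj, Finset.sum_product]
        rfl
    _ ≤ ∏ _i : Fin N, (1 : ℝ) := sum_prod_le_prod hf hc _
    _ = 1 := Finset.prod_const_one

theorem norm_det_le_of_col_le {n : Type*} [Fintype n] [DecidableEq n] (A : Matrix n n ℂ)
    {c : n → ℝ} (hA : ∀ i j, ‖A i j‖ ≤ c j) :
    ‖A.det‖ ≤ (Fintype.card n).factorial * ∏ j, c j := by
  rw [Matrix.det_apply]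
  refine (norm_sum_le_of_le (f := fun σ => Equiv.Perm.sign σ • ∏ i, A (σ i) i)
    (n := fun _ => ∏ j, c j) _ fun σ _ => ?_).trans ?_
  · have : ‖Equiv.Perm.sign σ • ∏ i, A (σ i) i‖ = ‖∏ i, A (σ i) i‖ := by
      rcases Int.units_eq_one_or (Equiv.Perm.sign σ) with h | h <;> simp [h]
    rw [this, norm_prod]
    exact Finset.prod_le_prod (fun _ _ => norm_nonneg _) fun i _ => hA _ _
  · simp [Fintype.card_perm]

section Kernel

variable {lam : ℕ → ℝ} {s M R : ℝ}

/-- The `inl` columns of the two-level kernel, at target height `z`. -/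
noncomputable def levelCol (lam : ℕ → ℝ) (R t : ℝ) {N : ℕ} (y : Fin N → ℕ)
    (x : Fin (N + 1) → ℕ) (z : ℕ) : Fin (N + 1) ⊕ Fin N → ℂ :=
  Sum.elim (fun i => eL lam R t (x i) z)
    fun i => (lam (y i) : ℂ) * (eL lam R t (y i) z - eL lam R t (y i + 1) z)

/-- The `inr` columns of the two-level kernel, as functions of `y'`. -/
noncomputable def lowerCol (lam : ℕ → ℝ) (R t : ℝ) {N : ℕ} (y : Fin N → ℕ)
    (x : Fin (N + 1) → ℕ) (y' : Fin N → ℕ) (j : Fin N) : Fin (N + 1) ⊕ Fin N → ℂ :=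
  Sum.elim (fun i => (1 / (lam (y' j) : ℂ)) *
      ((∑ z ∈ Finset.range (y' j + 1), eL lam R t (x i) z) - if (i : ℕ) ≤ (j : ℕ) then 1 else 0))
    fun i => eL lam R t (y i) (y' j)

/-- The matrix of the two-level kernel with prescribed `inl` columns. -/
noncomputable def kernelMatrix (lam : ℕ → ℝ) (R t : ℝ) {N : ℕ} (y : Fin N → ℕ)
    (x : Fin (N + 1) → ℕ) (y' : Fin N → ℕ) (v : Fin (N + 1) → Fin (N + 1) ⊕ Fin N → ℂ) :
    Matrix (Fin (N + 1) ⊕ Fin N) (Fin (N + 1) ⊕ Fin N) ℂ :=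
  Matrix.of fun a b => Sum.elim v (lowerCol lam R t y x y') b a

theorem Ut_eq_det_kernelMatrix (t : ℝ) {N : ℕ} (y : Fin N → ℕ) (x : Fin (N + 1) → ℕ)
    (y' : Fin N → ℕ) (x' : Fin (N + 1) → ℕ) :
    Ut lam R t N y x y' x' =
      (kernelMatrix lam R t y x y' fun j => levelCol lam R t y x (x' j)).det := by
  unfold Ut
  congr 1
  ext a b
  rcases a with a | a <;> rcases b with b | b <;> rfl

theorem det_kernelMatrix_sum (t : ℝ) {N : ℕ} (y : Fin N → ℕ) (x : Fin (N + 1) → ℕ)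
    (y' : Fin N → ℕ) (A : Fin (N + 1) → Finset ℕ) :
    (kernelMatrix lam R t y x y' fun j => ∑ z ∈ A j, levelCol lam R t y x z).det =
      ∑ x' ∈ Fintype.piFinset A, Ut lam R t N y x y' x' := by
  have key : ∀ v, (kernelMatrix lam R t y x y' v).det =
      (Matrix.detRowAlternating (n := Fin (N + 1) ⊕ Fin N) (R := ℂ)).toMultilinearMap.currySum v
        (lowerCol lam R t y x y') := by
    intro v
    rw [← Matrix.det_transpose, MultilinearMap.currySum_apply]
    change Matrix.detRowAlternating _ = Matrix.detRowAlternating _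
    congr 1
  simp only [Ut_eq_det_kernelMatrix, key]
  rw [MultilinearMap.map_sum_finset
    ((Matrix.detRowAlternating (n := Fin (N + 1) ⊕ Fin N) (R := ℂ)).toMultilinearMap.currySum)
    (fun _ z => levelCol lam R t y x z) A, _root_.sum_apply]

theorem sum_range_levelCol (h0 : ∀ k, 0 < lam k) (hub : ∀ k, lam k ≤ M) (hR : M < R) (t : ℝ)
    {N : ℕ} (y : Fin N → ℕ) (x : Fin (N + 1) → ℕ) (m : ℕ) :
    ∑ z ∈ Finset.range m, levelCol lam R t y x z =
      Sum.elim (fun i => 1 - birthTail lam R t (x i) m) fun i =>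
        (lam (y i) : ℂ) * (birthTail lam R t (y i + 1) m - birthTail lam R t (y i) m) := by
  ext a
  rw [Finset.sum_apply]
  rcases a with i | i
  · simp only [levelCol, Sum.elim_inl, sum_range_eL h0 hub hR]
  · simp only [levelCol, Sum.elim_inr]
    rw [← Finset.mul_sum, Finset.sum_sub_distrib, sum_range_eL h0 hub hR,
      sum_range_eL h0 hub hR]
    ring

theorem sum_mul_incidence {N : ℕ} (c : Fin N → ℂ) (j : Fin (N + 1)) :
    ∑ k, c k * ((if j = k.castSucc then 1 else 0) - if j = k.succ then 1 else 0) =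
      Fin.snoc (α := fun _ => ℂ) c 0 j - Fin.cons (α := fun _ => ℂ) 0 c j := by
  simp only [mul_sub, Finset.sum_sub_distrib, mul_ite, mul_one, mul_zero]
  congr 1
  · refine Fin.lastCases ?_ (fun j => ?_) j
    · simp [(Fin.castSucc_ne_last _).symm]
    · simp
  · refine Fin.cases ?_ (fun j => ?_) j
    · simp [(Fin.succ_ne_zero _).symm]
    · simp

/-- Once every `inl` column is summed over its interlacing interval, the kernel determinant
collapses to the Karlin-McGregor determinant of the lower level. -/
theorem det_kernelMatrix_limit (h0 : ∀ k, 0 < lam k) (hub : ∀ k, lam k ≤ M) (hR : M < R) (t : ℝ)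
    {N : ℕ} (y : Fin N → ℕ) (x : Fin (N + 1) → ℕ) (y' : Fin N → ℕ) :
    (kernelMatrix lam R t y x y' fun j =>
      Fin.snoc (α := fun _ => Fin (N + 1) ⊕ Fin N → ℂ)
        (fun k => ∑ z ∈ Finset.range (y' k + 1), levelCol lam R t y x z)
        (Sum.elim (fun _ => 1) fun _ => 0) j -
      Fin.cons (α := fun _ => Fin (N + 1) ⊕ Fin N → ℂ) 0
        (fun k => ∑ z ∈ Finset.range (y' k + 1), levelCol lam R t y x z) j).det =
      (Matrix.of fun i j => eL lam R t (y i) (y' j)).det := by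
  have hne : ∀ k, (lam k : ℂ) ≠ 0 := fun k => by exact_mod_cast (h0 k).ne'
  let B : Matrix (Fin (N + 1)) (Fin N) ℂ := Matrix.of fun i j => lowerCol lam R t y x y' j (.inl i)
  let D : Matrix (Fin N) (Fin N) ℂ := Matrix.of fun i j => eL lam R t (y i) (y' j)
  let E : Matrix (Fin N) (Fin (N + 1)) ℂ := Matrix.of fun k j =>
    (lam (y' k) : ℂ) * ((if j = k.castSucc then 1 else 0) - if j = k.succ then 1 else 0)
  have hfac : (kernelMatrix lam R t y x y' fun j =>
      Fin.snoc (α := fun _ => Fin (N + 1) ⊕ Fin N → ℂ)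
        (fun k => ∑ z ∈ Finset.range (y' k + 1), levelCol lam R t y x z)
        (Sum.elim (fun _ => 1) fun _ => 0) j -
      Fin.cons (α := fun _ => Fin (N + 1) ⊕ Fin N → ℂ) 0
        (fun k => ∑ z ∈ Finset.range (y' k + 1), levelCol lam R t y x z) j) =
      Matrix.fromBlocks 1 B 0 D * Matrix.fromBlocks 1 0 E 1 := by
    rw [Matrix.fromBlocks_multiply]
    simp only [Matrix.mul_one, Matrix.mul_zero, zero_add]
    ext a b
    rcases b with j | j
    · rcases a with i | i
      · have hB : ∀ k, B i k * lam (y' k) =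
            (∑ z ∈ Finset.range (y' k + 1), levelCol lam R t y x z) (.inl i) -
              if (i : ℕ) ≤ (k : ℕ) then 1 else 0 := by
          intro k
          have := hne (y' k)
          simp only [B, lowerCol, Matrix.of_apply, Sum.elim_inl, Finset.sum_apply, levelCol]
          field_simp
        simp only [Matrix.fromBlocks_apply₁₁, Matrix.add_apply, Matrix.mul_apply, E,
          Matrix.of_apply, ← mul_assoc, hB, sum_mul_incidence]
        simp only [kernelMatrix, Matrix.of_apply, Sum.elim_inl, Pi.sub_apply]
        have h1 : ∀ f : Fin N → Fin (N + 1) ⊕ Fin N → ℂ,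
            Fin.snoc (α := fun _ => Fin (N + 1) ⊕ Fin N → ℂ) f
              (Sum.elim (fun _ => 1) fun _ => 0) j (.inl i) =
            Fin.snoc (α := fun _ => ℂ) (fun k => f k (.inl i) -
              if (i : ℕ) ≤ (k : ℕ) then 1 else 0) 0 j + if i ≤ j then 1 else 0 := by
          intro f
          refine Fin.lastCases ?_ (fun j => ?_) j
          · simp [Fin.le_last]
          · simp [Fin.le_def]
        have h2 : ∀ f : Fin N → Fin (N + 1) ⊕ Fin N → ℂ,
            Fin.cons (α := fun _ => Fin (N + 1) ⊕ Fin N → ℂ) 0 f j (.inl i) =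
            Fin.cons (α := fun _ => ℂ) 0 (fun k => f k (.inl i) -
              if (i : ℕ) ≤ (k : ℕ) then 1 else 0) j + if i < j then 1 else 0 := by
          intro f
          refine Fin.cases ?_ (fun j => ?_) j
          · simp
          · simp [Fin.lt_def]
        rw [h1, h2, Matrix.one_apply]
        rcases lt_trichotomy i j with h | h | h
        · simp [h, h.le, h.ne]
        · simp only [h, le_refl, lt_irrefl, if_true, if_false]
          ring
        · simp [h.not_ge, h.not_gt, h.ne']
      · have hD : ∀ k, D i k * lam (y' k) =
            (∑ z ∈ Finset.range (y' k + 1), levelCol lam R t y x z) (.inr i) := by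
          intro k
          rw [sum_range_levelCol h0 hub hR, Sum.elim_inr, rate_mul_birthTail_sub_succ h0 hub hR,
            mul_comm]
          rfl
        simp only [Matrix.fromBlocks_apply₂₁, Matrix.mul_apply, E,
          Matrix.of_apply, ← mul_assoc, hD, sum_mul_incidence]
        simp only [kernelMatrix, Matrix.of_apply, Sum.elim_inl, Pi.sub_apply]
        congr 1
        · refine Fin.lastCases ?_ (fun j => ?_) j
          · simp
          · simp
        · refine Fin.cases ?_ (fun j => ?_) j
          · simp
          · simp
    · rcases a with i | i
      · simp [kernelMatrix, B]
      · simp [kernelMatrix, D, lowerCol]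
  rw [hfac, Matrix.det_mul, Matrix.det_fromBlocks_zero₂₁, Matrix.det_fromBlocks_zero₁₂]
  simp [D]

theorem exists_norm_col_le (hs : 0 < s) (hlb : ∀ k, s ≤ lam k) (hub : ∀ k, lam k ≤ M)
    (hR : M < R) (t : ℝ) {N : ℕ} (y : Fin N → ℕ) (x : Fin (N + 1) → ℕ) :
    ∃ K, 0 ≤ K ∧ ∀ a, (∀ z, ‖levelCol lam R t y x z a‖ ≤ K * (1 / 4) ^ z) ∧
      ∀ y' j, ‖lowerCol lam R t y x y' j a‖ ≤ K := by
  have h0 : ∀ k, 0 < lam k := fun k => hs.trans_le (hlb k)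
  have hle : ∀ z : ℕ, (1 / 4 : ℝ) ^ z ≤ 1 := fun z => pow_le_one₀ (by norm_num) (by norm_num)
  have hpt : ∀ a, ∃ K, 0 ≤ K ∧ (∀ z, ‖levelCol lam R t y x z a‖ ≤ K * (1 / 4) ^ z) ∧
      ∀ y' j, ‖lowerCol lam R t y x y' j a‖ ≤ K := by
    rintro (i | i)
    · obtain ⟨C, hC0, hC⟩ := exists_norm_eL_le h0 hub hR t (x i)
      obtain ⟨C', hC0', hC'⟩ := exists_norm_birthTail_le h0 hub hR t (x i)
      refine ⟨C + 1 / s * (1 + C' + 1), by positivity, fun z => (hC z).trans ?_, fun y' j => ?_⟩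
      · gcongr
        exact le_add_of_nonneg_right (by positivity)
      · refine le_trans ?_ (le_add_of_nonneg_left hC0)
        simp only [lowerCol, Sum.elim_inl]
        rw [sum_range_eL h0 hub hR, norm_mul, norm_div, norm_one, Complex.norm_real,
          Real.norm_of_nonneg (h0 _).le]
        have h1 : ‖(if (i : ℕ) ≤ (j : ℕ) then 1 else 0 : ℂ)‖ ≤ 1 := by split_ifs <;> simp
        have h2 : ‖birthTail lam R t (x i) (y' j + 1)‖ ≤ C' :=
          (hC' _).trans (mul_le_of_le_one_right hC0' (hle _))
        have h3 := norm_sub_le (1 : ℂ) (birthTail lam R t (x i) (y' j + 1))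
        rw [norm_one] at h3
        gcongr
        · exact hlb _
        · exact (norm_sub_le _ _).trans (add_le_add (by linarith) h1)
    · obtain ⟨C, hC0, hC⟩ := exists_norm_eL_le h0 hub hR t (y i)
      obtain ⟨C', hC0', hC'⟩ := exists_norm_eL_le h0 hub hR t (y i + 1)
      have hl := (h0 (y i)).le
      refine ⟨lam (y i) * (C + C') + C, by positivity, fun z => ?_, fun y' j => ?_⟩
      · simp only [levelCol, Sum.elim_inr]
        rw [norm_mul, Complex.norm_real, Real.norm_of_nonneg hl, add_mul, mul_assoc, add_mul]
        refine le_add_of_le_of_nonneg ?_ (by positivity)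
        gcongr
        exact (norm_sub_le _ _).trans (add_le_add (hC z) (hC' z))
      · simp only [lowerCol, Sum.elim_inr]
        refine ((hC _).trans (mul_le_of_le_one_right hC0 (hle _))).trans ?_
        exact le_add_of_nonneg_left (by positivity)
  choose K hK0 hK using hpt
  have hKle : ∀ a, K a ≤ ∑ b, K b := fun a =>
    Finset.single_le_sum (fun b _ => hK0 b) (Finset.mem_univ a)
  refine ⟨∑ a, K a, Finset.sum_nonneg fun a _ => hK0 a, fun a => ⟨fun z => ?_, fun y' j => ?_⟩⟩
  · exact ((hK a).1 z).trans (mul_le_mul_of_nonneg_right (hKle a) (by positivity))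
  · exact ((hK a).2 y' j).trans (hKle a)

theorem prod_quarter_pow_le {N : ℕ} {y' : Fin N → ℕ} {x' : Fin (N + 1) → ℕ}
    (h : Interlace y' x') :
    ∏ j, (1 / 4 : ℝ) ^ x' j ≤ (∏ j, (1 / 2 : ℝ) ^ y' j) * ∏ j, (1 / 2 : ℝ) ^ x' j := by
  have h1 : ∏ j, (1 / 4 : ℝ) ^ x' j = (∏ j, (1 / 2 : ℝ) ^ x' j) * ∏ j, (1 / 2 : ℝ) ^ x' j := by
    rw [← Finset.prod_mul_distrib]
    refine Finset.prod_congr rfl fun j _ => ?_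
    rw [← mul_pow]
    norm_num
  rw [h1]
  refine mul_le_mul_of_nonneg_right ?_ (by positivity)
  rw [Fin.prod_univ_succ]
  refine (mul_le_of_le_one_left (by positivity)
    (pow_le_one₀ (by norm_num) (by norm_num))).trans ?_
  exact Finset.prod_le_prod (fun j _ => by positivity) fun j _ =>
    pow_le_pow_of_le_one (by norm_num) (by norm_num) (h j).2.le

theorem summable_Ut (hs : 0 < s) (hlb : ∀ k, s ≤ lam k) (hub : ∀ k, lam k ≤ M)
    (hR : M < R) (t : ℝ) {N : ℕ} (y : Fin N → ℕ) (x : Fin (N + 1) → ℕ) :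
    Summable fun p : (Fin N → ℕ) × (Fin (N + 1) → ℕ) =>
      if Interlace p.1 p.2 then Ut lam R t N y x p.1 p.2 else 0 := by
  obtain ⟨K, hK0, hK⟩ := exists_norm_col_le hs hlb hub hR t y x
  have hsum := (summable_prod_pow N).mul_of_nonneg (summable_prod_pow (N + 1))
    (fun z => by positivity) (fun z => by positivity)
  refine Summable.of_norm_bounded
    (hsum.mul_left ((Fintype.card (Fin (N + 1) ⊕ Fin N)).factorial * (K ^ (N + 1) * K ^ N)))
    fun p => ?_
  split_ifs with h
  · rw [Ut_eq_det_kernelMatrix]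
    refine (norm_det_le_of_col_le _
      (c := Sum.elim (fun j => K * (1 / 4) ^ p.2 j) fun _ => K) ?_).trans ?_
    · rintro a (j | j)
      · exact (hK a).1 _
      · exact (hK a).2 _ _
    · rw [Fintype.prod_sum_type, mul_assoc]
      simp only [Sum.elim_inl, Sum.elim_inr, Finset.prod_mul_distrib, Finset.prod_const,
        Finset.card_univ, Fintype.card_fin]
      have := prod_quarter_pow_le h
      rw [mul_right_comm]
      gcongr
  · rw [norm_zero]
    positivity

theorem mem_piFinset_Ico_iff {N : ℕ} (y' : Fin N → ℕ) (x' : Fin (N + 1) → ℕ) (m : ℕ) :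
    x' ∈ Fintype.piFinset (fun j => Finset.Ico
      (Fin.cons (α := fun _ => ℕ) 0 (fun k => y' k + 1) j)
      (Fin.snoc (α := fun _ => ℕ) (fun k => y' k + 1) m j)) ↔
      Interlace y' x' ∧ x' (Fin.last N) < m := by
  simp only [Fintype.mem_piFinset, Finset.mem_Ico, forall_and, Interlace]
  rw [Fin.forall_fin_succ, Fin.forall_fin_succ']
  simp only [Fin.cons_zero, Fin.cons_succ, Fin.snoc_castSucc, Fin.snoc_last, Nat.zero_le,
    true_and, Nat.succ_le_iff, Nat.lt_succ_iff]
  tauto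

theorem tendsto_sum_range_levelCol (h0 : ∀ k, 0 < lam k) (hub : ∀ k, lam k ≤ M) (hR : M < R)
    (t : ℝ) {N : ℕ} (y : Fin N → ℕ) (x : Fin (N + 1) → ℕ) :
    Filter.Tendsto (fun m => ∑ z ∈ Finset.range m, levelCol lam R t y x z) Filter.atTop
      (nhds (Sum.elim (fun _ => 1) fun _ => 0)) := by
  simp only [sum_range_levelCol h0 hub hR]
  refine tendsto_pi_nhds.2 fun a => ?_
  rcases a with i | i
  · simpa using (tendsto_birthTail h0 hub hR t (x i)).const_sub 1
  · simpa using ((tendsto_birthTail h0 hub hR t (y i + 1)).sub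
      (tendsto_birthTail h0 hub hR t (y i))).const_mul (lam (y i) : ℂ)

theorem hasSum_Ut_upper (hs : 0 < s) (hlb : ∀ k, s ≤ lam k) (hub : ∀ k, lam k ≤ M)
    (hR : M < R) (t : ℝ) {N : ℕ} (y : Fin N → ℕ) (x : Fin (N + 1) → ℕ) {y' : Fin N → ℕ}
    (hy' : StrictMono y') :
    HasSum (fun x' => if Interlace y' x' then Ut lam R t N y x y' x' else 0)
      (Matrix.of fun i j => eL lam R t (y i) (y' j)).det := by
  have h0 : ∀ k, 0 < lam k := fun k => hs.trans_le (hlb k)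
  have hsum := (summable_Ut hs hlb hub hR t y x).prod_factor y'
  have hbox := hsum.hasSum.comp tendsto_piFinset_range
  have hfilter : ∀ m, (Fintype.piFinset fun _ : Fin (N + 1) => Finset.range m).filter
      (Interlace y') = Fintype.piFinset fun j => Finset.Ico
        (Fin.cons (α := fun _ => ℕ) 0 (fun k => y' k + 1) j)
        (Fin.snoc (α := fun _ => ℕ) (fun k => y' k + 1) m j) := by
    intro m
    ext x'
    rw [mem_piFinset_Ico_iff, Finset.mem_filter, Fintype.mem_piFinset, and_comm]
    refine and_congr_right fun h => ⟨fun hx => Finset.mem_range.1 (hx _), fun hx j => ?_⟩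
    exact Finset.mem_range.2 ((h.strictMono_upper.monotone (Fin.le_last j)).trans_lt hx)
  have hcol : Filter.Tendsto (fun m => kernelMatrix lam R t y x y' fun j =>
      Fin.snoc (α := fun _ => Fin (N + 1) ⊕ Fin N → ℂ)
        (fun k => ∑ z ∈ Finset.range (y' k + 1), levelCol lam R t y x z)
        (∑ z ∈ Finset.range m, levelCol lam R t y x z) j -
      Fin.cons (α := fun _ => Fin (N + 1) ⊕ Fin N → ℂ) 0
        (fun k => ∑ z ∈ Finset.range (y' k + 1), levelCol lam R t y x z) j) Filter.atTop
      (nhds (kernelMatrix lam R t y x y' fun j =>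
        Fin.snoc (α := fun _ => Fin (N + 1) ⊕ Fin N → ℂ)
          (fun k => ∑ z ∈ Finset.range (y' k + 1), levelCol lam R t y x z)
          (Sum.elim (fun _ => 1) fun _ => 0) j -
        Fin.cons (α := fun _ => Fin (N + 1) ⊕ Fin N → ℂ) 0
          (fun k => ∑ z ∈ Finset.range (y' k + 1), levelCol lam R t y x z) j)) := by
    refine tendsto_pi_nhds.2 fun a => tendsto_pi_nhds.2 fun b => ?_
    rcases b with j | j
    · simp only [kernelMatrix, Matrix.of_apply, Sum.elim_inl, Pi.sub_apply]
      refine Filter.Tendsto.sub_const ?_ _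
      refine Fin.lastCases ?_ (fun j => ?_) j
      · simp only [Fin.snoc_last]
        exact tendsto_pi_nhds.1 (tendsto_sum_range_levelCol h0 hub hR t y x) a
      · simp only [Fin.snoc_castSucc]
        exact tendsto_const_nhds
    · exact tendsto_const_nhds
  have hdet := (Continuous.matrix_det continuous_id).continuousAt.tendsto.comp hcol
  simp only [id, det_kernelMatrix_limit h0 hub hR] at hdet
  rw [← tendsto_nhds_unique hbox (hdet.congr' ?_)]
  · exact hsum.hasSum
  filter_upwards [Filter.eventually_ge_atTop (Finset.univ.sup y' + 1)] with m hm
  rw [Function.comp_apply, Function.comp_apply, ← Finset.sum_filter, hfilter,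
    ← det_kernelMatrix_sum]
  congr 2
  ext1 j
  rw [Finset.sum_Ico_eq_sub]
  · congr 1
    · refine Fin.lastCases ?_ (fun j => ?_) j <;> simp
    · refine Fin.cases ?_ (fun j => ?_) j <;> simp
  · revert j
    refine Fin.lastCases ?_ fun k => ?_
    · rw [Fin.snoc_last]
      refine le_trans ?_ hm
      refine Fin.cases (Nat.zero_le _) (fun i => ?_) (Fin.last N)
      exact Nat.succ_le_succ (Finset.le_sup (Finset.mem_univ i))
    · rw [Fin.snoc_castSucc]
      refine Fin.cases (motive := fun j => j = k.castSucc → Fin.cons (α := fun _ => ℕ) 0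
        (fun k => y' k + 1) j ≤ y' k + 1) (fun _ => Nat.zero_le _) (fun i hi => ?_) _ rfl
      have hik : i < k := Fin.castSucc_lt_castSucc_iff.1 (hi ▸ Fin.castSucc_lt_succ)
      exact Nat.succ_le_succ (hy' hik).le

end Kernel

/-- for all t ≥ 0 and (y,x) ∈ W^{N,N+1}, the series
Σ_{(y',x') ∈ W^{N,N+1}} U_t^{N,N+1}[(y,x),(y',x')] converges and its value is at most 1
(in the complex order). -/
theorem stmt_4 (lam : ℕ → ℝ) (s M : ℝ) (hs : 0 < s)
    (hlb : ∀ x, s ≤ lam x) (hub : ∀ x, lam x ≤ M)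
    (R : ℝ) (hR : M < R) (N : ℕ) (hN : 1 ≤ N) (t : ℝ) (ht : 0 ≤ t)
    (y : Fin N → ℕ) (x : Fin (N + 1) → ℕ) (hyx : Interlace y x) :
    ∃ S : ℂ,
      HasSum (fun p : { p : (Fin N → ℕ) × (Fin (N + 1) → ℕ) // Interlace p.1 p.2 } =>
        Ut lam R t N y x p.1.1 p.1.2) S ∧ S ≤ 1 := by
  classical
  have h0 : ∀ k, 0 < lam k := fun k => hs.trans_le (hlb k)
  obtain ⟨S, hS⟩ := summable_Ut hs hlb hub hR t y x
  refine ⟨S, ?_, ?_⟩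
  · rw [← hasSum_subtype_iff_of_support_subset (s := {p | Interlace p.1 p.2})] at hS
    · exact hS.congr_fun fun p => (if_pos p.2).symm
    · intro p hp
      by_contra h
      exact hp (if_neg h)
  · let d : (Fin N → ℕ) → ℝ := fun y' =>
      if StrictMono y' then (Matrix.of fun i j => (eL lam R t (y i) (y' j)).re).det else 0
    have hd : HasSum (fun y' => (d y' : ℂ)) S := by
      refine hS.prod_fiberwise fun y' => ?_
      by_cases hy' : StrictMono y'
      · convert hasSum_Ut_upper hs hlb hub hR t y x hy'
        simp only [d, if_pos hy']
        change Complex.ofRealHom _ = _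
        rw [RingHom.map_det]
        congr 1
        ext i j
        exact ofReal_eL_re h0 hub hR t _ _
      · simp only [d, if_neg hy', Complex.ofReal_zero]
        convert hasSum_zero with x'
        exact if_neg fun h => hy' h.strictMono
    have hre : HasSum d S.re := Complex.hasSum_re hd
    have hSre : (S.re : ℂ) = S := (Complex.hasSum_ofReal.2 hre).unique hd
    rw [← hSre, ← Complex.ofReal_one, Complex.real_le_real]
    refine hasSum_le_of_sum_le hre fun A => ?_
    simp only [d]
    rw [← Finset.sum_filter]
    exact sum_det_le_one (f := fun i z => (eL lam R t (y i) z).re)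
      (fun i z => eL_re_nonneg h0 hub hR ht _ _)
      (fun i m => sum_range_eL_re_le_one h0 hub hR ht _ m) _ fun y' hy' =>
        (Finset.mem_filter.1 hy').2
end

section
/- Let λ : ℤ₊ → ℝ satisfy (UB) and let N ≥ 1. For all t ≥ 0, (y,x) ∈ W^{N,N+1} and y' ∈ W^N: Σ_{x' ∈ ℤ₊^{N+1} : (y',x') ∈ W^{N,N+1}} U_t^{N,N+1}[(y,x),(y',x')] = det( e^{tL}(y_i, y'_j) )_{i,j=1}^N, the series converging absolutely. (Equivalently, the projection of U_t^{N,N+1} onto the y-coordinates is the Karlin–McGregor semigroup: Π P_t^N = U_t^{N,N+1} Π.) -/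
open Complex MeasureTheory Finset
open scoped Real ComplexOrder

/-- The product `∏_{k<n} λ(k)/(λ(k)−w)`, so that `psiF lam x = psiProd lam (x + 1)`. -/
noncomputable def psiProd (lam : ℕ → ℝ) (n : ℕ) (w : ℂ) : ℂ :=
  ∏ k ∈ Finset.range n, (lam k : ℂ) / ((lam k : ℂ) - w)

section Analysis

variable {lam : ℕ → ℝ} {M R : ℝ}

lemma ofReal_sub_ne_zero_of_lt_norm (hpos : ∀ k, 0 < lam k) (hub : ∀ k, lam k ≤ M) {w : ℂ}
    (hw : M < ‖w‖) (k : ℕ) : (lam k : ℂ) - w ≠ 0 := by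
  intro h
  have h1 : ‖w‖ = lam k := by
    rw [← sub_eq_zero.1 h, Complex.norm_real, Real.norm_of_nonneg (hpos k).le]
  linarith [hub k]

lemma differentiable_pF_mul_exp (lam : ℕ → ℝ) (t : ℝ) (x : ℕ) :
    Differentiable ℂ fun w => pF lam x w * Complex.exp (-(t : ℂ) * w) := by
  unfold pF
  fun_prop

lemma differentiableAt_psiProd (hpos : ∀ k, 0 < lam k) (hub : ∀ k, lam k ≤ M) {w : ℂ}
    (hw : M < ‖w‖) (n : ℕ) : DifferentiableAt ℂ (psiProd lam n) w := by
  unfold psiProd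
  refine DifferentiableAt.fun_finsetProd fun k _ => ?_
  exact (differentiableAt_const _).div ((differentiableAt_const _).sub differentiableAt_id)
    (ofReal_sub_ne_zero_of_lt_norm hpos hub hw k)

lemma continuousOn_psiProd (hpos : ∀ k, 0 < lam k) (hub : ∀ k, lam k ≤ M) (hR : M < R) (n : ℕ) :
    ContinuousOn (psiProd lam n) (Metric.sphere 0 R) := fun w hw =>
  (differentiableAt_psiProd hpos hub
    (by rw [mem_sphere_zero_iff_norm.1 hw]; exact hR) n).continuousAt.continuousWithinAt

lemma eL_radius_eq (hpos : ∀ k, 0 < lam k) (hub : ∀ k, lam k ≤ M) (hR : M < R) {R' : ℝ}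
    (hR' : R ≤ R') (t : ℝ) (x y : ℕ) : eL lam R t x y = eL lam R' t x y := by
  have h0 : 0 < R := ((hpos 0).trans_le (hub 0)).trans hR
  have hd : ∀ w : ℂ, M < ‖w‖ → DifferentiableAt ℂ
      (fun w => psiF lam y w * pF lam x w * Complex.exp (-(t : ℂ) * w)) w := by
    intro w hw
    simp only [mul_assoc]
    exact (differentiableAt_psiProd hpos hub hw (y + 1)).mul
      (differentiable_pF_mul_exp lam t x w)
  unfold eL
  rw [Complex.circleIntegral_eq_of_differentiable_on_annulus_off_countable h0 hR'
    (Set.countable_empty)]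
  · intro w hw
    have : R ≤ ‖w‖ := by simpa using hw.2
    exact (hd w (by linarith)).continuousAt.continuousWithinAt
  · intro w hw
    have : R < ‖w‖ := by simpa using hw.1.2
    exact hd w (by linarith)

lemma psiProd_sub_succ (hpos : ∀ k, 0 < lam k) (hub : ∀ k, lam k ≤ M) {w : ℂ} (hw : M < ‖w‖)
    (n : ℕ) : psiProd lam n w - psiProd lam (n + 1) w
      = -(1 / (lam n : ℂ)) * (w * psiProd lam (n + 1) w) := by
  have h1 := ofReal_sub_ne_zero_of_lt_norm hpos hub hw n
  have h2 : (lam n : ℂ) ≠ 0 := by exact_mod_cast (hpos n).ne'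
  unfold psiProd
  rw [Finset.prod_range_succ]
  field_simp
  ring

/-- The contour integral `(2πi)⁻¹ ∮_{|w|=R} ∏_{k<n} λ(k)/(λ(k)−w) g(w) dw`. -/
noncomputable def psiIntegral (lam : ℕ → ℝ) (R : ℝ) (g : ℂ → ℂ) (n : ℕ) : ℂ :=
  (2 * (Real.pi : ℂ) * Complex.I)⁻¹ * ∮ w in C(0, R), psiProd lam n w * g w

lemma psiIntegral_congr (hR : 0 ≤ R) {g h : ℂ → ℂ} (hgh : Set.EqOn g h (Metric.sphere 0 R))
    (n : ℕ) : psiIntegral lam R g n = psiIntegral lam R h n :=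
  congrArg ((2 * (Real.pi : ℂ) * Complex.I)⁻¹ * ·)
    (circleIntegral.integral_congr hR fun w hw => congrArg (psiProd lam n w * ·) (hgh hw))

lemma psiIntegral_sub_succ (hpos : ∀ k, 0 < lam k) (hub : ∀ k, lam k ≤ M) (hR : M < R)
    {g : ℂ → ℂ} (hg : ContinuousOn g (Metric.sphere 0 R)) (n : ℕ) :
    psiIntegral lam R g n - psiIntegral lam R g (n + 1)
      = -(1 / (lam n : ℂ)) * psiIntegral lam R (fun w => w * g w) (n + 1) := by
  have h0 : 0 ≤ R := (((hpos 0).trans_le (hub 0)).trans hR).le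
  have hi : ∀ m, CircleIntegrable (fun w => psiProd lam m w * g w) 0 R := fun m =>
    ((continuousOn_psiProd hpos hub hR m).mul hg).circleIntegrable h0
  unfold psiIntegral
  rw [← mul_sub, ← circleIntegral.integral_sub (hi n) (hi (n + 1)), mul_left_comm,
    ← circleIntegral.integral_const_mul (-(1 / (lam n : ℂ)))]
  refine congrArg _ (circleIntegral.integral_congr h0 fun w hw => ?_)
  have hw' : M < ‖w‖ := by rw [mem_sphere_zero_iff_norm.1 hw]; exact hR
  simp only
  rw [← sub_mul, psiProd_sub_succ hpos hub hw' n]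
  ring

lemma eL_eq_psiIntegral (lam : ℕ → ℝ) (R t : ℝ) (x n : ℕ) :
    eL lam R t x n = -(1 / (lam n : ℂ)) *
      psiIntegral lam R (fun w => pF lam x w * Complex.exp (-(t : ℂ) * w)) (n + 1) := by
  simp only [eL, psiIntegral, mul_assoc]
  rfl

lemma mul_eL_sub_succ_eq (hpos : ∀ k, 0 < lam k) (hub : ∀ k, lam k ≤ M) (hR : M < R) (t : ℝ)
    (x n : ℕ) :
    (lam x : ℂ) * (eL lam R t x n - eL lam R t (x + 1) n)
      = psiIntegral lam R (fun w => pF lam x w * Complex.exp (-(t : ℂ) * w)) n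
        - psiIntegral lam R (fun w => pF lam x w * Complex.exp (-(t : ℂ) * w)) (n + 1) := by
  have h0 : 0 ≤ R := (((hpos 0).trans_le (hub 0)).trans hR).le
  have hx : (lam x : ℂ) ≠ 0 := by exact_mod_cast (hpos x).ne'
  have hi : ∀ z, CircleIntegrable
      (fun w => psiProd lam (n + 1) w * (pF lam z w * Complex.exp (-(t : ℂ) * w))) 0 R := fun z =>
    ((continuousOn_psiProd hpos hub hR _).mul
      (differentiable_pF_mul_exp lam t z).continuous.continuousOn).circleIntegrable h0
  rw [psiIntegral_sub_succ hpos hub hR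
    (differentiable_pF_mul_exp lam t x).continuous.continuousOn n, eL_eq_psiIntegral,
    eL_eq_psiIntegral, ← mul_sub, mul_left_comm]
  congr 1
  unfold psiIntegral
  rw [← mul_sub, ← circleIntegral.integral_sub (hi x) (hi (x + 1)), mul_left_comm,
    ← circleIntegral.integral_const_mul (lam x : ℂ)]
  congr 2
  funext w
  simp only [pF, Finset.prod_range_succ]
  field_simp
  ring

/-- Intertwining: `λ(x) ∇_x Σ_{z ≤ n} e^{tL}(x,z) = λ(n) e^{tL}(x,n)`. -/
lemma mul_sum_eL_sub_sum_eL (hpos : ∀ k, 0 < lam k) (hub : ∀ k, lam k ≤ M) (hR : M < R) (t : ℝ)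
    (x n : ℕ) :
    (lam x : ℂ) * (∑ z ∈ Finset.range (n + 1), eL lam R t x z
        - ∑ z ∈ Finset.range (n + 1), eL lam R t (x + 1) z)
      = (lam n : ℂ) * eL lam R t x n := by
  have h0 : 0 ≤ R := (((hpos 0).trans_le (hub 0)).trans hR).le
  have hn : (lam n : ℂ) ≠ 0 := by exact_mod_cast (hpos n).ne'
  have hz : psiIntegral lam R (fun w => pF lam x w * Complex.exp (-(t : ℂ) * w)) 0 = 0 := by
    simp only [psiIntegral, psiProd, Finset.range_zero, Finset.prod_empty, one_mul]
    rw [Complex.circleIntegral_eq_zero_of_differentiable_on_off_countable h0 Set.countable_empty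
      (differentiable_pF_mul_exp lam t x).continuous.continuousOn
      fun w _ => differentiable_pF_mul_exp lam t x w, mul_zero]
  rw [← Finset.sum_sub_distrib, Finset.mul_sum]
  simp only [mul_eL_sub_succ_eq hpos hub hR]
  rw [Finset.sum_range_sub', hz, eL_eq_psiIntegral]
  field_simp
  ring

lemma norm_psiProd_le (hpos : ∀ k, 0 < lam k) (hub : ∀ k, lam k ≤ M) {w : ℂ}
    (hw : 3 * M ≤ ‖w‖) (n : ℕ) : ‖psiProd lam n w‖ ≤ (1 / 2) ^ n := by
  unfold psiProd
  rw [norm_prod]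
  refine (Finset.prod_le_prod (fun k _ => norm_nonneg _) (g := fun _ => (1 / 2 : ℝ))
    fun k _ => ?_).trans_eq (by simp)
  have h1 : ‖(lam k : ℂ)‖ = lam k := by
    rw [Complex.norm_real, Real.norm_of_nonneg (hpos k).le]
  have h2 : ‖w‖ - ‖(lam k : ℂ)‖ ≤ ‖(lam k : ℂ) - w‖ := by
    rw [norm_sub_rev]; exact norm_sub_norm_le _ _
  have := hpos k
  have := hub k
  rw [norm_div, div_le_iff₀ (by linarith)]
  linarith

/-- The kernel is stochastic: its rows sum to one. -/
lemma hasSum_eL (hpos : ∀ k, 0 < lam k) (hub : ∀ k, lam k ≤ M) (hR : M < R) (t : ℝ) (x : ℕ) :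
    HasSum (eL lam R t x) 1 := by
  have hM : 0 < M := (hpos 0).trans_le (hub 0)
  obtain ⟨R', hRR', h3⟩ : ∃ R', R ≤ R' ∧ 3 * M ≤ R' := ⟨max R (3 * M), le_max_left _ _,
    le_max_right _ _⟩
  have hR' : M < R' := by linarith
  have h0 : 0 < R' := by linarith
  have heq : eL lam R t x = eL lam R' t x := funext (eL_radius_eq hpos hub hR hRR' t x)
  rw [heq]
  let g : ℂ → ℂ := fun w => w⁻¹ * (pF lam x w * Complex.exp (-(t : ℂ) * w))
  have hne : ∀ w ∈ Metric.sphere (0 : ℂ) R', w ≠ 0 := by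
    intro w hw h
    rw [mem_sphere_zero_iff_norm, h, norm_zero] at hw
    linarith
  have hg : ContinuousOn g (Metric.sphere 0 R') :=
    (continuousOn_id.inv₀ hne).mul (differentiable_pF_mul_exp lam t x).continuous.continuousOn
  have hstep : ∀ n, eL lam R' t x n = psiIntegral lam R' g n - psiIntegral lam R' g (n + 1) := by
    intro n
    rw [psiIntegral_sub_succ hpos hub hR' hg, eL_eq_psiIntegral]
    exact congrArg _ (psiIntegral_congr h0.le
      (fun w hw => (mul_inv_cancel_left₀ (hne w hw) _).symm) (n + 1))
  have hzero : psiIntegral lam R' g 0 = 1 := by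
    have := (differentiable_pF_mul_exp lam t x).diffContOnCl
      |>.two_pi_i_inv_smul_circleIntegral_sub_inv_smul (Metric.mem_ball_self (x := (0 : ℂ)) h0)
    simp only [sub_zero, smul_eq_mul] at this
    simp only [psiIntegral, psiProd, Finset.range_zero, Finset.prod_empty, one_mul, g]
    rw [this]
    have hk : ∀ k, (lam k : ℂ) ≠ 0 := fun k => by exact_mod_cast (hpos k).ne'
    simp [pF, hk]
  obtain ⟨C, hC⟩ := (isCompact_sphere (0 : ℂ) R').exists_bound_of_continuousOn hg
  have hbound : ∀ n, ‖psiIntegral lam R' g n‖ ≤ R' * ((1 / 2) ^ n * C) := by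
    intro n
    refine circleIntegral.norm_two_pi_i_inv_smul_integral_le_of_norm_le_const h0.le fun w hw => ?_
    rw [norm_mul]
    exact mul_le_mul (norm_psiProd_le hpos hub (by rw [mem_sphere_zero_iff_norm.1 hw]; exact h3) n)
      (hC w hw) (norm_nonneg _) (by positivity)
  have hgeom : Summable fun n : ℕ => R' * ((1 / 2 : ℝ) ^ n * C) :=
    (summable_geometric_two.mul_right C).mul_left R'
  have hsum : Summable (psiIntegral lam R' g) := Summable.of_norm_bounded hgeom hbound
  have hfun : eL lam R' t x
      = fun n => psiIntegral lam R' g n - psiIntegral lam R' g (n + 1) := funext hstep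
  rw [hfun, (hsum.sub ((summable_nat_add_iff 1).2 hsum)).hasSum_iff_tendsto_nat]
  simp only [Finset.sum_range_sub', hzero]
  simpa using tendsto_const_nhds.sub hsum.tendsto_atTop_zero

end Analysis

section Summation

lemma hasSum_mul_prod {ι κ : Type*} {f : ι → ℂ} {g : κ → ℂ} {a b : ℂ} (hf : HasSum f a)
    (hg : HasSum g b) : HasSum (fun p : ι × κ => f p.1 * g p.2) (a * b) :=
  hf.mul hg (summable_mul_of_summable_norm hf.summable.norm hg.summable.norm)

/-- A finite product of convergent series, expanded over all tuples of indices. -/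
lemma hasSum_pi_prod {n : ℕ} {f : Fin n → ℕ → ℂ} {a : Fin n → ℂ}
    (h : ∀ j, HasSum (f j) (a j)) :
    HasSum (fun x : Fin n → ℕ => ∏ j, f j (x j)) (∏ j, a j) := by
  induction n with
  | zero => simp
  | succ n ih =>
    have ih' : HasSum (fun x : Fin n → ℕ => ∏ j : Fin n, f j.succ (x j))
        (∏ j : Fin n, a j.succ) := ih fun j => h j.succ
    rw [← (Fin.consEquiv fun _ => ℕ).hasSum_iff, Fin.prod_univ_succ]
    refine (hasSum_mul_prod (h 0) ih').congr_fun fun p => ?_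
    simp [Fin.prod_univ_succ, Fin.consEquiv]

/-- A determinant whose first columns are series is the sum of the determinants. -/
lemma hasSum_det_fromCols {m n : ℕ} {f : Fin m ⊕ Fin n → Fin m → ℕ → ℂ}
    {A : Matrix (Fin m ⊕ Fin n) (Fin m) ℂ} (K : Matrix (Fin m ⊕ Fin n) (Fin n) ℂ)
    (h : ∀ i j, HasSum (f i j) (A i j)) :
    HasSum (fun x : Fin m → ℕ => (Matrix.fromCols (Matrix.of fun i j => f i j (x j)) K).det)
      (Matrix.fromCols A K).det := by
  simp only [Matrix.det_apply', Fintype.prod_sum_type, Matrix.of_apply, Matrix.fromCols_apply_inl,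
    Matrix.fromCols_apply_inr]
  exact hasSum_sum fun σ _ => ((hasSum_pi_prod fun j => h (σ (Sum.inl j)) j).mul_right _).mul_left _

/-- The set of admissible values of the coordinate `x j` in `Interlace y x`. -/
def interlaceSlot {N : ℕ} (y : Fin N → ℕ) (j : Fin (N + 1)) : Set ℕ :=
  {z | ∀ i : Fin N, (i.castSucc = j → z ≤ y i) ∧ (i.succ = j → y i < z)}

lemma interlace_iff_forall_mem_interlaceSlot {N : ℕ} {y : Fin N → ℕ} {x : Fin (N + 1) → ℕ} :
    Interlace y x ↔ ∀ j, x j ∈ interlaceSlot y j := by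
  constructor
  · rintro h j i
    exact ⟨by rintro rfl; exact (h i).1, by rintro rfl; exact (h i).2⟩
  · exact fun h i => ⟨(h i.castSucc i).1 rfl, (h i.succ i).2 rfl⟩

lemma hasSum_indicator_le (f : ℕ → ℂ) (n : ℕ) :
    HasSum ({z | z ≤ n}.indicator f) (∑ z ∈ Finset.range (n + 1), f z) := by
  rw [Finset.sum_congr rfl fun z hz => (Set.indicator_of_mem
    (show z ∈ {z | z ≤ n} from Nat.lt_succ_iff.1 (Finset.mem_range.1 hz)) f).symm]
  refine hasSum_sum_of_ne_finset_zero fun z hz => Set.indicator_of_notMem ?_ f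
  simpa [Nat.lt_succ_iff] using hz

/-- Summing a series over one slot of an interlacing pattern. -/
lemma hasSum_indicator_interlaceSlot {N : ℕ} {y : Fin N → ℕ} (hy : StrictMono y) {f : ℕ → ℂ}
    {a : ℂ} (hf : HasSum f a) (j : Fin (N + 1)) :
    HasSum ((interlaceSlot y j).indicator f)
      ((if j = Fin.last N then a else 0) + ∑ k, (∑ z ∈ Finset.range (y k + 1), f z) *
        ((if k.castSucc = j then 1 else 0) - if k.succ = j then 1 else 0)) := by
  have hup : HasSum ({z | ∀ i : Fin N, i.castSucc = j → z ≤ y i}.indicator f)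
      ((if j = Fin.last N then a else 0) + ∑ k, if k.castSucc = j then
        ∑ z ∈ Finset.range (y k + 1), f z else 0) := by
    induction j using Fin.lastCases with
    | last => simpa [Fin.castSucc_ne_last] using hf
    | cast i => simpa [Fin.castSucc_ne_last] using hasSum_indicator_le f (y i)
  have hlow : HasSum ({z | ∃ i : Fin N, i.succ = j ∧ z ≤ y i}.indicator f)
      (∑ k : Fin N, if k.succ = j then ∑ z ∈ Finset.range (y k + 1), f z else 0) := by
    induction j using Fin.cases with
    | zero => simp [Fin.succ_ne_zero]
    | succ i => simpa [Fin.succ_inj] using hasSum_indicator_le f (y i)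
  have hfun : (interlaceSlot y j).indicator f
      = fun z => {z | ∀ i : Fin N, i.castSucc = j → z ≤ y i}.indicator f z
        - {z | ∃ i : Fin N, i.succ = j ∧ z ≤ y i}.indicator f z := by
    have hsub : {z | ∃ i : Fin N, i.succ = j ∧ z ≤ y i} ⊆
        {z | ∀ i : Fin N, i.castSucc = j → z ≤ y i} := by
      rintro z ⟨i, rfl, hz⟩ k hk
      refine hz.trans (hy.monotone (Fin.le_def.2 ?_))
      have := congrArg Fin.val hk
      simp at this
      omega
    have hdiff : interlaceSlot y j = {z | ∀ i : Fin N, i.castSucc = j → z ≤ y i} \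
        {z | ∃ i : Fin N, i.succ = j ∧ z ≤ y i} := by
      ext z
      simp [interlaceSlot, forall_and]
    rw [hdiff, Set.indicator_sdiff hsub]
    rfl
  have hval := hup.sub hlow
  rw [add_sub_assoc, ← Finset.sum_sub_distrib] at hval
  rw [hfun]
  simpa only [mul_sub, mul_ite, mul_one, mul_zero] using hval

lemma sum_le_mul_castSucc_sub_succ {N : ℕ} (i j : Fin (N + 1)) :
    (if j = Fin.last N then (1 : ℂ) else 0) + ∑ k : Fin N, (if (i : ℕ) ≤ (k : ℕ) then 1 else 0) *
        ((if k.castSucc = j then 1 else 0) - if k.succ = j then 1 else 0)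
      = if i = j then 1 else 0 := by
  have hup : (if j = Fin.last N then (1 : ℂ) else 0) + ∑ k : Fin N,
      (if k.castSucc = j then if (i : ℕ) ≤ (k : ℕ) then 1 else 0 else 0)
      = if (i : ℕ) ≤ j then 1 else 0 := by
    induction j using Fin.lastCases with
    | last => simp [Fin.castSucc_ne_last, Fin.is_le]
    | cast l => simp [Fin.castSucc_ne_last]
  have hlow : ∑ k : Fin N, (if k.succ = j then if (i : ℕ) ≤ (k : ℕ) then (1 : ℂ) else 0 else 0)
      = if (i : ℕ) < j then 1 else 0 := by
    induction j using Fin.cases with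
    | zero => simp [Fin.succ_ne_zero]
    | succ l => simp [Fin.succ_inj]
  simp only [mul_sub, mul_ite, mul_one, mul_zero, Finset.sum_sub_distrib, ← add_sub_assoc]
  rw [hup, hlow]
  rcases lt_trichotomy (i : ℕ) j with h | h | h
  · simp [h, h.le, Fin.ext_iff, h.ne]
  · simp [h, Fin.ext_iff]
  · simp [h.not_ge, h.not_gt, Fin.ext_iff, h.ne']

end Summation

/-- projection onto the y-coordinates gives the Karlin–McGregor semigroup:
for all t ≥ 0, (y,x) ∈ W^{N,N+1} and y' ∈ W^N,
Σ_{x' : (y',x') ∈ W^{N,N+1}} U_t^{N,N+1}[(y,x),(y',x')] = det(e^{tL}(y_i,y'_j)),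
the series converging absolutely. -/
theorem stmt_5 (lam : ℕ → ℝ) (s M : ℝ) (hs : 0 < s)
    (hlb : ∀ x, s ≤ lam x) (hub : ∀ x, lam x ≤ M)
    (R : ℝ) (hR : M < R) (N : ℕ) (hN : 1 ≤ N) (t : ℝ) (ht : 0 ≤ t)
    (y : Fin N → ℕ) (x : Fin (N + 1) → ℕ) (hyx : Interlace y x)
    (y' : Fin N → ℕ) (hy' : StrictMono y') :
    HasSum (fun x' : { x' : Fin (N + 1) → ℕ // Interlace y' x' } =>
        Ut lam R t N y x y' x'.1)
      ((Matrix.of fun i j => eL lam R t (y i) (y' j)).det) ∧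
    Summable (fun x' : { x' : Fin (N + 1) → ℕ // Interlace y' x' } =>
        ‖Ut lam R t N y x y' x'.1‖) := by
  have hpos : ∀ k, 0 < lam k := fun k => hs.trans_le (hlb k)
  have hne : ∀ k, (lam k : ℂ) ≠ 0 := fun k => by exact_mod_cast (hpos k).ne'
  suffices h : HasSum (fun x' : { x' : Fin (N + 1) → ℕ // Interlace y' x' } =>
      Ut lam R t N y x y' x'.1) ((Matrix.of fun i j => eL lam R t (y i) (y' j)).det) from
    ⟨h, h.summable.norm⟩
  let B : Matrix (Fin (N + 1)) (Fin N) ℂ := Matrix.of fun i j => (1 / (lam (y' j) : ℂ)) *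
    ((∑ z ∈ Finset.range (y' j + 1), eL lam R t (x i) z)
      - if (i : ℕ) ≤ (j : ℕ) then 1 else 0)
  let D : Matrix (Fin N) (Fin N) ℂ := Matrix.of fun i j => eL lam R t (y i) (y' j)
  let E : Matrix (Fin N) (Fin (N + 1)) ℂ := Matrix.of fun k j => (lam (y' k) : ℂ) *
    ((if k.castSucc = j then 1 else 0) - if k.succ = j then 1 else 0)
  let f : Fin (N + 1) ⊕ Fin N → ℕ → ℂ := Sum.elim (fun i => eL lam R t (x i))
    fun i z => (lam (y i) : ℂ) * (eL lam R t (y i) z - eL lam R t (y i + 1) z)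
  have hsum := hasSum_eL hpos hub hR t
  have hf : ∀ i j, HasSum ((interlaceSlot y' j).indicator (f i))
      (Matrix.fromRows (1 + B * E) (D * E) i j) := by
    rintro (i | i) j
    · have hval : Matrix.fromRows (1 + B * E) (D * E) (Sum.inl i) j
          = (if j = Fin.last N then 1 else 0) +
            ∑ k, (∑ z ∈ Finset.range (y' k + 1), f (Sum.inl i) z) *
              ((if k.castSucc = j then 1 else 0) - if k.succ = j then 1 else 0) := by
        simp only [Matrix.fromRows_apply_inl, Matrix.add_apply, Matrix.one_apply, Matrix.mul_apply]
        rw [← sum_le_mul_castSucc_sub_succ i j, add_assoc, ← Finset.sum_add_distrib]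
        refine congrArg _ (Finset.sum_congr rfl fun k _ => ?_)
        simp only [B, E, f, Matrix.of_apply, Sum.elim_inl]
        have := hne (y' k)
        field_simp
        ring
      rw [hval]
      exact hasSum_indicator_interlaceSlot hy' (hsum (x i)) j
    · have htot : HasSum (f (Sum.inr i)) 0 := by
        simpa [f] using ((hsum (y i)).sub (hsum (y i + 1))).mul_left (lam (y i) : ℂ)
      have hval : Matrix.fromRows (1 + B * E) (D * E) (Sum.inr i) j
          = (if j = Fin.last N then 0 else 0) +
            ∑ k, (∑ z ∈ Finset.range (y' k + 1), f (Sum.inr i) z) *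
              ((if k.castSucc = j then 1 else 0) - if k.succ = j then 1 else 0) := by
        simp only [Matrix.fromRows_apply_inr, Matrix.mul_apply, ite_self, zero_add]
        refine Finset.sum_congr rfl fun k _ => ?_
        simp only [D, E, f, Matrix.of_apply, Sum.elim_inr]
        rw [← Finset.mul_sum, Finset.sum_sub_distrib, mul_sum_eL_sub_sum_eL hpos hub hR]
        ring
      rw [hval]
      exact hasSum_indicator_interlaceSlot hy' htot j
  have hdet : (Matrix.fromCols (Matrix.fromRows (1 + B * E) (D * E)) (Matrix.fromRows B D)).det = D.det := by
    have hmul : Matrix.fromCols (Matrix.fromRows (1 + B * E) (D * E)) (Matrix.fromRows B D)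
        = Matrix.fromBlocks 1 B 0 D * Matrix.fromBlocks 1 0 E 1 := by
      rw [Matrix.fromBlocks_multiply]
      ext (i | i) (j | j) <;> simp
    rw [hmul, Matrix.det_mul, Matrix.det_fromBlocks_zero₂₁, Matrix.det_fromBlocks_zero₁₂]
    simp
  have key := hasSum_det_fromCols (Matrix.fromRows B D) hf
  rw [hdet] at key
  refine (hasSum_subtype_iff_indicator (s := {x' | Interlace y' x'})
    (f := fun x' => Ut lam R t N y x y' x')).2 ?_
  convert key using 1
  funext x'
  by_cases hx' : Interlace y' x'
  · rw [Set.indicator_of_mem (show x' ∈ {x' | Interlace y' x'} from hx')]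
    rw [interlace_iff_forall_mem_interlaceSlot] at hx'
    unfold Ut
    congr 1
    ext (i | i) (j | j) <;> simp [hx', f, B, D]
  · rw [Set.indicator_of_notMem (show x' ∉ {x' | Interlace y' x'} from hx')]
    obtain ⟨j, hj⟩ := not_forall.1 (mt interlace_iff_forall_mem_interlaceSlot.2 hx')
    exact (Matrix.det_eq_zero_of_column_eq_zero (Sum.inl j) fun i => by simp [hj]).symm
end
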